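/- Injectivity at the endpoint of the interpolating family via the intersection lemma: Let E be a finite-dimensional complex vector space and ω a symmetric ℂ-bilinear form on E. Let E₀ and E₁ be real subspaces of E such that Re ω is negative definite on E₀ and on E₁, assume E is the internal direct sum (as a real vector space) of E₁ and i·E₁, and let π : E → E be the ℝ-linear projection onto E₁ with kernel i·E₁. Then the restriction of π to E₀ is injective; consequently, if moreover finrank_ℝ E₀ = finrank_ℝ E₁, then π maps E₀ ℝ-linearly isomorphically onto E₁. -/

import Mathlib

open Complex Module

noncomputable def mulI (E : Type*) [AddCommGroup E] [Module ℂ E] : E →ₗ[ℝ] E where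
  toFun v := Complex.I • v
  map_add' v w := smul_add _ _ _
  map_smul' t v := (smul_comm t Complex.I v).symm

def ImIsotropic {E : Type*} [AddCommGroup E] [Module ℂ E]
    (ω : E →ₗ[ℂ] E →ₗ[ℂ] ℂ) (V : Submodule ℝ E) : Prop :=
  ∀ v ∈ V, ∀ w ∈ V, (ω v w).im = 0

def ReNegDef {E : Type*} [AddCommGroup E] [Module ℂ E]
    (ω : E →ₗ[ℂ] E →ₗ[ℂ] ℂ) (V : Submodule ℝ E) : Prop :=
  ∀ v ∈ V, v ≠ 0 → (ω v v).re < 0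

/-!
Multiplication by `i` turns `ω v v` into its negative, so `Re ω` is positive definite on `i • E₁`.
Hence `i • E₁`, the kernel of `π`, meets the negative definite subspace `E₀` only in `0`.
-/

section Linear

theorem ker_eq_of_isProj_of_sup_eq_top {R M : Type*} [Ring R] [AddCommGroup M] [Module R M]
    {p q : Submodule R M} {f : M →ₗ[R] M} (hf : LinearMap.IsProj p f)
    (hq : q ≤ LinearMap.ker f) (hsup : p ⊔ q = ⊤) : LinearMap.ker f = q := by
  refine (eq_of_le_of_inf_le_of_le_sup (z := p) hq ?_ ?_).symm
  · exact (hf.isCompl.symm.disjoint.le_bot).trans bot_le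
  · rw [sup_comm, hsup]
    exact le_top

theorem map_eq_of_injOn_of_finrank_eq {K V W : Type*} [DivisionRing K] [AddCommGroup V]
    [Module K V] [AddCommGroup W] [Module K W] {f : V →ₗ[K] W} {p : Submodule K V}
    {q : Submodule K W} [FiniteDimensional K q] (hinj : Set.InjOn f p) (hle : p.map f ≤ q)
    (hrank : finrank K p = finrank K q) : p.map f = q := by
  have hmap : finrank K (p.map f) = finrank K p := by
    rw [← LinearMap.range_domRestrict]
    exact LinearMap.finrank_range_of_inj hinj.injective
  exact Submodule.eq_of_le_of_finrank_eq hle (hmap.trans hrank)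

end Linear

section ReNegDef

variable {E : Type*} [AddCommGroup E] [Module ℂ E] {ω : E →ₗ[ℂ] E →ₗ[ℂ] ℂ} {E₀ E₁ : Submodule ℝ E}

theorem apply_mulI_mulI (v w : E) : ω (mulI E v) (mulI E w) = -ω v w := by
  change ω (I • v) (I • w) = -ω v w
  rw [map_smul, map_smul, LinearMap.smul_apply, smul_smul, I_mul_I, neg_one_smul]

theorem ReNegDef.re_pos_of_mem_map_mulI (h₁ : ReNegDef ω E₁) {v : E}
    (hv : v ∈ E₁.map (mulI E)) (hv₀ : v ≠ 0) : 0 < (ω v v).re := by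
  obtain ⟨w, hw, rfl⟩ := hv
  have hw₀ : w ≠ 0 := ne_of_apply_ne (mulI E) (by rwa [map_zero])
  rw [apply_mulI_mulI, neg_re]
  exact neg_pos.2 (h₁ w hw hw₀)

theorem ReNegDef.disjoint_map_mulI (h₀ : ReNegDef ω E₀) (h₁ : ReNegDef ω E₁) :
    Disjoint E₀ (E₁.map (mulI E)) := by
  refine Submodule.disjoint_def.2 fun v hv₀ hv₁ ↦ by_contra fun hv ↦ ?_
  exact lt_asymm (h₀ v hv₀ hv) (h₁.re_pos_of_mem_map_mulI hv₁ hv)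

theorem stmt11_general (h₀ : ReNegDef ω E₀) (h₁ : ReNegDef ω E₁) {π : E →ₗ[ℝ] E}
    (hπ : LinearMap.IsProj E₁ π) (hker : LinearMap.ker π = E₁.map (mulI E)) :
    Set.InjOn π (E₀ : Set E) ∧
    (FiniteDimensional ℝ E₁ → finrank ℝ E₀ = finrank ℝ E₁ → E₀.map π = E₁) := by
  have hinj : Set.InjOn π (E₀ : Set E) :=
    LinearMap.disjoint_ker_iff_injOn.1 (hker ▸ h₀.disjoint_map_mulI h₁)
  have hle : E₀.map π ≤ E₁ := Submodule.map_le_iff_le_comap.2 fun v _ ↦ hπ.map_mem v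
  exact ⟨hinj, fun _ ↦ map_eq_of_injOn_of_finrank_eq hinj hle⟩

end ReNegDef

/-- Injectivity at the endpoint of the interpolating family: `π` restricted to `E₀`
is injective, and if `finrank ℝ E₀ = finrank ℝ E₁` then `π` maps `E₀` isomorphically
onto `E₁`. -/
theorem stmt11 {E : Type*} [AddCommGroup E] [Module ℂ E] [FiniteDimensional ℂ E]
    (ω : E →ₗ[ℂ] E →ₗ[ℂ] ℂ) (hsym : ∀ v w : E, ω v w = ω w v)
    (E₀ E₁ : Submodule ℝ E)
    (h₀neg : ReNegDef ω E₀) (h₁neg : ReNegDef ω E₁)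
    (hdisj : E₁ ⊓ E₁.map (mulI E) = ⊥) (hsup : E₁ ⊔ E₁.map (mulI E) = ⊤)
    (π : E →ₗ[ℝ] E)
    (hπ_id : ∀ v ∈ E₁, π v = v)
    (hπ_ker : ∀ v ∈ E₁.map (mulI E), π v = 0)
    (hπ_range : ∀ v : E, π v ∈ E₁) :
    Set.InjOn π (E₀ : Set E) ∧
    (finrank ℝ E₀ = finrank ℝ E₁ → E₀.map π = E₁) := by
  have hπ : LinearMap.IsProj E₁ π := ⟨hπ_range, hπ_id⟩
  have hker := ker_eq_of_isProj_of_sup_eq_top hπ hπ_ker hsup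
  exact (stmt11_general h₀neg h₁neg hπ hker).imp_right fun h ↦ h inferInstance
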